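/- (Vanishing of the good null components of the approximate mass metric.) Let M ∈ ℝ and Ω := {(t,x) ∈ ℝ^{1+3} : |x| > 0 and |x| > 2M}. Define the time-independent symmetric 2-tensor h̃ on Ω by h̃_{00} := 2M/r, h̃_{0i} := 0, h̃_{ij} := −(4M log(r−2M)/r) δ_{ij} − (x_i x_j/r²)(2M/r − 4M log(r−2M)/r), with r = |x|. Then on Ω: (i) h̃_{αβ}L^αL^β = 0; (ii) h̃_{αβ}L^α(E^A)^β = 0 for A = 1,2,3; and (iii) for each of the 11 Minkowskian commuting vector fields Γ, (Γh̃)_{αβ}L^αL^β = 0, where (Γh̃)_{αβ} denotes componentwise application of Γ to the components h̃_{αβ}. -/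

import Mathlib

open MeasureTheory

noncomputable def pd (μ : Fin 4) (f : (Fin 4 → ℝ) → ℝ) (x : Fin 4 → ℝ) : ℝ :=
  fderiv ℝ f x (Pi.single μ 1)

noncomputable def pd3 (i : Fin 3) (f : (Fin 3 → ℝ) → ℝ) (x : Fin 3 → ℝ) : ℝ :=
  fderiv ℝ f x (Pi.single i 1)

noncomputable def rad (p : Fin 4 → ℝ) : ℝ := Real.sqrt (∑ i : Fin 3, (p i.succ) ^ 2)

noncomputable def rad3 (y : Fin 3 → ℝ) : ℝ := Real.sqrt (∑ i : Fin 3, (y i) ^ 2)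

noncomputable def spt (t : ℝ) (y : Fin 3 → ℝ) : Fin 4 → ℝ := ![t, y 0, y 1, y 2]

noncomputable def minkVF : Fin 11 → (Fin 4 → ℝ) → Fin 4 → ℝ :=
  ![fun _ => Pi.single 0 1,
    fun _ => Pi.single 1 1,
    fun _ => Pi.single 2 1,
    fun _ => Pi.single 3 1,
    fun p => p 1 • (Pi.single 2 1 : Fin 4 → ℝ) - p 2 • (Pi.single 1 1 : Fin 4 → ℝ),
    fun p => p 1 • (Pi.single 3 1 : Fin 4 → ℝ) - p 3 • (Pi.single 1 1 : Fin 4 → ℝ),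
    fun p => p 2 • (Pi.single 3 1 : Fin 4 → ℝ) - p 3 • (Pi.single 2 1 : Fin 4 → ℝ),
    fun p => p 0 • (Pi.single 1 1 : Fin 4 → ℝ) + p 1 • (Pi.single 0 1 : Fin 4 → ℝ),
    fun p => p 0 • (Pi.single 2 1 : Fin 4 → ℝ) + p 2 • (Pi.single 0 1 : Fin 4 → ℝ),
    fun p => p 0 • (Pi.single 3 1 : Fin 4 → ℝ) + p 3 • (Pi.single 0 1 : Fin 4 → ℝ),
    fun p => p]

noncomputable def GammaList : List (Fin 11) → ((Fin 4 → ℝ) → ℝ) → (Fin 4 → ℝ) → ℝ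
  | [] => fun f p => f p
  | k :: I => fun f p => fderiv ℝ (GammaList I f) p (minkVF k p)

noncomputable def derivNormSq (f : (Fin 4 → ℝ) → ℝ) (p : Fin 4 → ℝ) : ℝ :=
  ∑ μ : Fin 4, (pd μ f p) ^ 2

noncomputable def derivNorm (f : (Fin 4 → ℝ) → ℝ) (p : Fin 4 → ℝ) : ℝ :=
  Real.sqrt (derivNormSq f p)

noncomputable def dS (f : (Fin 4 → ℝ) → ℝ) (p : Fin 4 → ℝ) : ℝ :=
  (1 / 2) * (pd 0 f p + ∑ i : Fin 3, (p i.succ / rad p) * pd i.succ f p)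

noncomputable def dQ (f : (Fin 4 → ℝ) → ℝ) (p : Fin 4 → ℝ) : ℝ :=
  (1 / 2) * ((∑ i : Fin 3, (p i.succ / rad p) * pd i.succ f p) - pd 0 f p)

noncomputable def angSq (f : (Fin 4 → ℝ) → ℝ) (p : Fin 4 → ℝ) : ℝ :=
  (1 / 2) * (∑ i : Fin 3, ∑ j : Fin 3,
    ((p i.succ / rad p) * pd j.succ f p - (p j.succ / rad p) * pd i.succ f p) ^ 2)

noncomputable def goodNormSq (f : (Fin 4 → ℝ) → ℝ) (p : Fin 4 → ℝ) : ℝ :=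
  (dS f p) ^ 2 + angSq f p

noncomputable def goodNorm (f : (Fin 4 → ℝ) → ℝ) (p : Fin 4 → ℝ) : ℝ :=
  Real.sqrt (goodNormSq f p)

noncomputable def gradSq (f : (Fin 4 → ℝ) → ℝ) (p : Fin 4 → ℝ) : ℝ :=
  (pd 0 f p) ^ 2 + ∑ i : Fin 3, (pd i.succ f p) ^ 2

noncomputable def Lup (p : Fin 4 → ℝ) : Fin 4 → ℝ :=
  ![1, p 1 / rad p, p 2 / rad p, p 3 / rad p]

noncomputable def Llow (p : Fin 4 → ℝ) : Fin 4 → ℝ :=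
  ![-1, p 1 / rad p, p 2 / rad p, p 3 / rad p]

noncomputable def Lbup (p : Fin 4 → ℝ) : Fin 4 → ℝ :=
  ![1, -(p 1 / rad p), -(p 2 / rad p), -(p 3 / rad p)]

noncomputable def Evec : Fin 3 → (Fin 4 → ℝ) → Fin 4 → ℝ :=
  ![fun p => (p 2 / rad p) • (Pi.single 3 1 : Fin 4 → ℝ) - (p 3 / rad p) • (Pi.single 2 1 : Fin 4 → ℝ),
    fun p => (p 1 / rad p) • (Pi.single 3 1 : Fin 4 → ℝ) - (p 3 / rad p) • (Pi.single 1 1 : Fin 4 → ℝ),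
    fun p => (p 1 / rad p) • (Pi.single 2 1 : Fin 4 → ℝ) - (p 2 / rad p) • (Pi.single 1 1 : Fin 4 → ℝ)]

noncomputable def frameVF : Fin 5 → (Fin 4 → ℝ) → Fin 4 → ℝ :=
  ![Lup, Lbup, Evec 0, Evec 1, Evec 2]

noncomputable def mInv : Fin 4 → Fin 4 → ℝ :=
  fun α β => if α = β then (if α = 0 then -1 else 1) else 0

noncomputable def wgt (γ q : ℝ) : ℝ :=
  if 0 ≤ q then 1 + (1 + |q|) ^ (1 + 2 * γ) else 1 + (1 + |q|) ^ (-(γ / 2))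

noncomputable def wgt' (γ q : ℝ) : ℝ :=
  if 0 ≤ q then (1 + 2 * γ) * (1 + |q|) ^ (2 * γ) else (γ / 2) * (1 + |q|) ^ (-(γ / 2) - 1)

noncomputable def matNorm (H : (Fin 4 → ℝ) → Fin 4 → Fin 4 → ℝ) (p : Fin 4 → ℝ) : ℝ :=
  Real.sqrt (∑ α : Fin 4, ∑ β : Fin 4, (H p α β) ^ 2)

noncomputable def matLL (H : (Fin 4 → ℝ) → Fin 4 → Fin 4 → ℝ) (p : Fin 4 → ℝ) : ℝ :=
  |∑ α : Fin 4, ∑ β : Fin 4, H p α β * Llow p α * Llow p β|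

noncomputable def dmatNorm (H : (Fin 4 → ℝ) → Fin 4 → Fin 4 → ℝ) (p : Fin 4 → ℝ) : ℝ :=
  Real.sqrt (∑ c : Fin 4, ∑ α : Fin 4, ∑ β : Fin 4, (pd c (fun y => H y α β) p) ^ 2)

noncomputable def dmatLL (H : (Fin 4 → ℝ) → Fin 4 → Fin 4 → ℝ) (p : Fin 4 → ℝ) : ℝ :=
  Real.sqrt (∑ u : Fin 5,
    (∑ α : Fin 4, ∑ β : Fin 4,
      fderiv ℝ (fun y => H y α β) p (frameVF u p) * Llow p α * Llow p β) ^ 2)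

noncomputable def gdmatNorm (H : (Fin 4 → ℝ) → Fin 4 → Fin 4 → ℝ) (p : Fin 4 → ℝ) : ℝ :=
  Real.sqrt (∑ α : Fin 4, ∑ β : Fin 4, goodNormSq (fun y => H y α β) p)

/-- The (time-independent) approximate mass metric perturbation `h̃_{μν}` as a function
on spacetime: `h̃_{00} = 2M/r`, `h̃_{0i} = 0`,
`h̃_{ij} = −(4M log(r−2M)/r)δ_{ij} − (x_i x_j/r²)(2M/r − 4M log(r−2M)/r)`. -/
noncomputable def hS17 (M : ℝ) (p : Fin 4 → ℝ) : Fin 4 → Fin 4 → ℝ :=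
  Fin.cons (Fin.cons (2 * M / rad p) (fun _ : Fin 3 => 0))
    (fun i : Fin 3 => Fin.cons 0 (fun j : Fin 3 =>
      -(4 * M * Real.log (rad p - 2 * M) / rad p) * (if i = j then 1 else 0)
        - (p i.succ * p j.succ / (rad p) ^ 2)
            * (2 * M / rad p - 4 * M * Real.log (rad p - 2 * M) / rad p)))

noncomputable def auxA (M : ℝ) (y : Fin 4 → ℝ) : ℝ :=
  -(4 * M * Real.log (rad y - 2 * M) / rad y)

noncomputable def auxC (M : ℝ) (y : Fin 4 → ℝ) : ℝ :=
  (2 * M / rad y - 4 * M * Real.log (rad y - 2 * M) / rad y) / (rad y) ^ 2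

theorem rad_sq_aux (y : Fin 4 → ℝ) : rad y ^ 2 = y 1 ^ 2 + y 2 ^ 2 + y 3 ^ 2 := by
  unfold rad
  rw [Real.sq_sqrt (Finset.sum_nonneg fun i _ => sq_nonneg _)]
  simp [Fin.sum_univ_succ]
  ring

theorem rad_diff_aux (p : Fin 4 → ℝ) (h0 : 0 < rad p) : DifferentiableAt ℝ rad p := by
  have h : (∑ i : Fin 3, (p i.succ) ^ 2) ≠ 0 := by
    intro h
    unfold rad at h0
    rw [h] at h0
    simp at h0
  unfold rad
  refine DifferentiableAt.sqrt ?_ h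
  fun_prop

theorem hS17_zz (M : ℝ) (y : Fin 4 → ℝ) :
    hS17 M y 0 0 = -auxA M y + auxC M y * (y 1 ^ 2 + y 2 ^ 2 + y 3 ^ 2) := by
  rw [← rad_sq_aux]
  change 2 * M / rad y = _
  unfold auxA auxC
  by_cases h : rad y = 0
  · simp [h]
  · field_simp
    ring

theorem hS17_zs (M : ℝ) (y : Fin 4 → ℝ) (j : Fin 3) : hS17 M y 0 j.succ = 0 := rfl

theorem hS17_sz (M : ℝ) (y : Fin 4 → ℝ) (j : Fin 3) : hS17 M y j.succ 0 = 0 := rfl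

theorem hS17_ss (M : ℝ) (y : Fin 4 → ℝ) (i j : Fin 3) :
    hS17 M y i.succ j.succ =
      auxA M y * (if i = j then 1 else 0) - y i.succ * y j.succ * auxC M y := by
  change -(4 * M * Real.log (rad y - 2 * M) / rad y) * (if i = j then 1 else 0)
        - (y i.succ * y j.succ / (rad y) ^ 2)
            * (2 * M / rad y - 4 * M * Real.log (rad y - 2 * M) / rad y) = _
  unfold auxA auxC
  ring

theorem fd_zz (M : ℝ) (p v : Fin 4 → ℝ) (hA : DifferentiableAt ℝ (auxA M) p)
    (hC : DifferentiableAt ℝ (auxC M) p) :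
    fderiv ℝ (fun y => hS17 M y 0 0) p v =
      -fderiv ℝ (auxA M) p v + fderiv ℝ (auxC M) p v * (p 1 ^ 2 + p 2 ^ 2 + p 3 ^ 2)
        + 2 * auxC M p * (p 1 * v 1 + p 2 * v 2 + p 3 * v 3) := by
  simp only [hS17_zz, pow_two]
  have e (i : Fin 4) : HasFDerivAt (fun y : Fin 4 → ℝ => y i)
      (ContinuousLinearMap.proj (R := ℝ) (φ := fun _ : Fin 4 => ℝ) i) p := hasFDerivAt_apply i p
  have := hA.hasFDerivAt.fun_neg.fun_add (hC.hasFDerivAt.fun_mul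
    ((((e 1).fun_mul (e 1)).fun_add ((e 2).fun_mul (e 2))).fun_add ((e 3).fun_mul (e 3))))
  rw [this.fderiv]
  simp
  ring

theorem fd_ss (M : ℝ) (p v : Fin 4 → ℝ) (hA : DifferentiableAt ℝ (auxA M) p)
    (hC : DifferentiableAt ℝ (auxC M) p) (i j : Fin 3) :
    fderiv ℝ (fun y => hS17 M y i.succ j.succ) p v =
      fderiv ℝ (auxA M) p v * (if i = j then 1 else 0)
        - (v i.succ * p j.succ + p i.succ * v j.succ) * auxC M p
        - p i.succ * p j.succ * fderiv ℝ (auxC M) p v := by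
  simp only [hS17_ss]
  have e (i : Fin 4) : HasFDerivAt (fun y : Fin 4 → ℝ => y i)
      (ContinuousLinearMap.proj (R := ℝ) (φ := fun _ : Fin 4 => ℝ) i) p := hasFDerivAt_apply i p
  have := (hA.hasFDerivAt.mul_const (if i = j then (1 : ℝ) else 0)).fun_sub
    (((e i.succ).fun_mul (e j.succ)).fun_mul hC.hasFDerivAt)
  rw [this.fderiv]
  split_ifs <;> simp <;> ring

theorem fd_LL (M : ℝ) (p v : Fin 4 → ℝ) (h0 : 0 < rad p) (hM : 2 * M < rad p) :
    (∑ α : Fin 4, ∑ β : Fin 4,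
          fderiv ℝ (fun y => hS17 M y α β) p v * Lup p α * Lup p β) = 0 := by
  have hr := rad_diff_aux p h0
  have hl : rad p - 2 * M ≠ 0 := by linarith
  have hlog : DifferentiableAt ℝ (fun y => Real.log (rad y - 2 * M)) p :=
    (hr.sub_const _).log hl
  have hi : DifferentiableAt ℝ (fun y => (rad y)⁻¹) p := hr.fun_inv h0.ne'
  have hA : DifferentiableAt ℝ (auxA M) p := by
    unfold auxA
    simp only [div_eq_mul_inv]
    exact ((hlog.const_mul _).fun_mul hi).fun_neg
  have hC : DifferentiableAt ℝ (auxC M) p := by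
    unfold auxC
    simp only [div_eq_mul_inv]
    exact ((hi.const_mul _).fun_sub ((hlog.const_mul _).fun_mul hi)).fun_mul
      ((hr.fun_pow 2).fun_inv (pow_ne_zero 2 h0.ne'))
  have hs := rad_sq_aux p
  simp only [Fin.sum_univ_succ (n := 3), fd_zz M p v hA hC, fd_ss M p v hA hC, hS17_zs, hS17_sz]
  simp [Fin.sum_univ_succ, Lup]
  have hn := h0.ne'
  generalize fderiv ℝ (auxA M) p v = a
  generalize fderiv ℝ (auxC M) p v = c
  generalize auxC M p = C
  generalize rad p = r at *
  field_simp
  linear_combination (-a + c * (p 1 ^ 2 + p 2 ^ 2 + p 3 ^ 2)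
    + 2 * C * (p 1 * v 1 + p 2 * v 2 + p 3 * v 3)) * hs

/-- Vanishing of the good null components of the approximate mass
metric on `{|x| > 0} ∩ {|x| > 2M}`: (i) `h̃_{LL} = 0`; (ii) `h̃_{LE^A} = 0`;
(iii) `(Γh̃)_{LL} = 0` for each of the 11 Minkowskian commuting vector fields `Γ`. -/
theorem stmt17 (M : ℝ) (p : Fin 4 → ℝ) (h0 : 0 < rad p) (hM : 2 * M < rad p) :
    ((∑ α : Fin 4, ∑ β : Fin 4, hS17 M p α β * Lup p α * Lup p β) = 0)
    ∧ (∀ A : Fin 3,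
        (∑ α : Fin 4, ∑ β : Fin 4, hS17 M p α β * Lup p α * Evec A p β) = 0)
    ∧ (∀ k : Fin 11,
        (∑ α : Fin 4, ∑ β : Fin 4,
          fderiv ℝ (fun y => hS17 M y α β) p (minkVF k p) * Lup p α * Lup p β) = 0) := by
  have hs := rad_sq_aux p
  have hn := h0.ne'
  refine ⟨?_, ?_, fun k => fd_LL M p _ h0 hM⟩
  · simp only [Fin.sum_univ_succ (n := 3), hS17_zz, hS17_ss, hS17_zs, hS17_sz]
    simp [Fin.sum_univ_succ, Lup]
    generalize auxA M p = a
    generalize auxC M p = C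
    generalize rad p = r at *
    field_simp
    linear_combination (-a + C * (p 1 ^ 2 + p 2 ^ 2 + p 3 ^ 2)) * hs
  · intro A
    simp only [Fin.sum_univ_succ (n := 3), hS17_zz, hS17_ss, hS17_zs, hS17_sz]
    fin_cases A <;> simp [Fin.sum_univ_succ, Lup, Evec, Pi.single_apply] <;>
    generalize auxA M p = a <;>
    generalize auxC M p = C <;>
    generalize rad p = r at * <;>
    field_simp <;> ring_nf
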